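/- Let X be a set equipped with a symmetric adjacency relation ∼ making (X,∼) a connected graph, let Y ⊆ X be nonempty, let F : Y → ℝ be bounded, and let f : X∖Y → ℝ satisfy inf f > 0 and sup f < ∞. If u₁, u₂ : X → ℝ are bounded functions such that, for i = 1,2, uᵢ = F on Y and uᵢ(x) = (sup{uᵢ(y) : y ∼ x} + inf{uᵢ(y) : y ∼ x})/2 + f(x) for every x ∈ X ∖ Y, then u₁ = u₂. -/

import Mathlib

/-!
For a relation without dead ends off `Y`, the operator sending `u` to the midrange of its values at
the neighbors is monotone, commutes with adding constants and is positively homogeneous.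
Monotonicity and translation invariance put a subsolution below a supersolution whose source is
larger by a uniform gap: near the supremum of their difference the gap would be violated. As the
source is at least `c > 0`, replacing a supersolution `v` by `(1 + ε) v` creates the gap `ε c`;
letting `ε → 0` gives the comparison principle, hence uniqueness.
-/

open Set Filter Topology Bornology
open scoped Pointwise

section Midrange

/-- The midpoint between the supremum and the infimum of a set of reals: the averaging operation in
the discrete infinity Laplacian. It has a junk value when the set is empty or unbounded. -/
noncomputable def midrange (s : Set ℝ) : ℝ :=
  (sSup s + sInf s) / 2

theorem midrange_smul {a : ℝ} (ha : 0 ≤ a) (s : Set ℝ) : midrange (a • s) = a * midrange s := by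
  simp only [midrange, Real.sSup_smul_of_nonneg ha, Real.sInf_smul_of_nonneg ha, smul_eq_mul]
  ring

theorem midrange_image_le_add {α : Type*} {s : Set α} {u v : α → ℝ} {K : ℝ} (hs : s.Nonempty)
    (hu : BddBelow (u '' s)) (hv : BddAbove (v '' s)) (h : ∀ x ∈ s, u x ≤ v x + K) :
    midrange (u '' s) ≤ midrange (v '' s) + K := by
  have hsup : sSup (u '' s) ≤ sSup (v '' s) + K :=
    csSup_le (hs.image u) <| forall_mem_image.2 fun x hx ↦
      (h x hx).trans (by gcongr; exact le_csSup hv (mem_image_of_mem v hx))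
  have hinf : sInf (u '' s) - K ≤ sInf (v '' s) :=
    le_csInf (hs.image v) <| forall_mem_image.2 fun x hx ↦
      sub_le_iff_le_add.2 ((csInf_le hu (mem_image_of_mem u hx)).trans (h x hx))
  unfold midrange
  linarith

end Midrange

section Comparison

variable {X : Type*} {adj : X → X → Prop} {Y : Set X} {f g u v : X → ℝ}

/-- `u` is a subsolution off `Y` of the discrete infinity Poisson equation with source `f`: its
discrete infinity Laplacian is at least `-2 f` there. -/
def IsSubsolution (adj : X → X → Prop) (Y : Set X) (f u : X → ℝ) : Prop :=
  ∀ x ∉ Y, u x ≤ midrange (u '' {y | adj x y}) + f x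

/-- `v` is a supersolution off `Y` of the discrete infinity Poisson equation with source `f`: its
discrete infinity Laplacian is at most `-2 f` there. -/
def IsSupersolution (adj : X → X → Prop) (Y : Set X) (f v : X → ℝ) : Prop :=
  ∀ x ∉ Y, midrange (v '' {y | adj x y}) + f x ≤ v x

theorem IsSupersolution.smul {a : ℝ} (ha : 0 ≤ a) (hv : IsSupersolution adj Y f v) :
    IsSupersolution adj Y (a • f) (a • v) := by
  intro x hx
  have himage : (a • v) '' {y | adj x y} = a • (v '' {y | adj x y}) :=
    image_comp (a • ·) v _
  calc midrange ((a • v) '' {y | adj x y}) + (a • f) x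
      = a * (midrange (v '' {y | adj x y}) + f x) := by
        rw [himage, midrange_smul ha, Pi.smul_apply, smul_eq_mul, mul_add]
    _ ≤ (a • v) x := mul_le_mul_of_nonneg_left (hv x hx) ha

theorem IsSubsolution.le_add_of_source_gap {K δ : ℝ} (hadj : ∀ x ∉ Y, ∃ y, adj x y)
    (hu : IsSubsolution adj Y f u) (hv : IsSupersolution adj Y g v)
    (hub : IsBounded (range u)) (hvb : IsBounded (range v))
    (hδ : 0 < δ) (hfg : ∀ x ∉ Y, f x + δ ≤ g x) (huv : ∀ x ∈ Y, u x ≤ v x + K) (x : X) :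
    u x ≤ v x + K := by
  have hbdd : BddAbove (range fun x ↦ u x - v x) := by
    simpa only [sub_eq_add_neg] using hub.bddAbove.range_add hvb.bddBelow.range_neg
  set M := ⨆ x, (u x - v x)
  have hM : ∀ x, u x - v x ≤ M := le_ciSup hbdd
  have hoff : ∀ x ∉ Y, u x - v x ≤ M - δ := by
    intro x hx
    have hmid : midrange (u '' {y | adj x y}) ≤ midrange (v '' {y | adj x y}) + M :=
      midrange_image_le_add (hadj x hx) (hub.bddBelow.mono (image_subset_range _ _))
        (hvb.bddAbove.mono (image_subset_range _ _)) fun y _ ↦ sub_le_iff_le_add'.1 (hM y)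
    linarith [hu x hx, hv x hx, hfg x hx]
  have hmax : M ≤ max K (M - δ) := by
    have : Nonempty X := ⟨x⟩
    refine ciSup_le fun y ↦ le_max_iff.2 ?_
    by_cases hy : y ∈ Y
    · exact .inl (sub_le_iff_le_add'.2 (huv y hy))
    · exact .inr (hoff y hy)
  have hMK : M ≤ K := (le_max_iff.1 hmax).resolve_right (by linarith)
  exact sub_le_iff_le_add'.1 ((hM x).trans hMK)

theorem IsSubsolution.le_of_isSupersolution {c : ℝ} (hadj : ∀ x ∉ Y, ∃ y, adj x y)
    (hu : IsSubsolution adj Y f u) (hv : IsSupersolution adj Y f v)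
    (hub : IsBounded (range u)) (hvb : IsBounded (range v))
    (hc : 0 < c) (hf : ∀ x ∉ Y, c ≤ f x) (huv : ∀ x ∈ Y, u x ≤ v x) : u ≤ v := by
  intro x
  obtain ⟨b, hb⟩ := hvb.bddBelow
  have hperturb : ∀ ε > 0, u x ≤ v x + ε * (v x - b) := by
    intro ε hε
    have hsmul : IsBounded (range ((1 + ε) • v)) := by
      simpa only [← range_smul] using! hvb.smul₀ (1 + ε)
    have hgap : ∀ y ∉ Y, f y + ε * c ≤ (1 + ε) * f y := fun y hy ↦ by
      linarith [mul_le_mul_of_nonneg_left (hf y hy) hε.le]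
    have hbdry : ∀ y ∈ Y, u y ≤ (1 + ε) * v y + -(ε * b) := fun y hy ↦ by
      linarith [huv y hy, mul_le_mul_of_nonneg_left (hb (mem_range_self y)) hε.le]
    calc u x ≤ (1 + ε) * v x + -(ε * b) :=
          hu.le_add_of_source_gap hadj (hv.smul (by positivity)) hub hsmul (by positivity)
            hgap hbdry x
      _ = v x + ε * (v x - b) := by ring
  have hlim : Tendsto (fun ε : ℝ ↦ v x + ε * (v x - b)) (𝓝[>] 0) (𝓝 (v x)) :=
    (Continuous.tendsto' (by fun_prop) 0 (v x) (by simp)).mono_left nhdsWithin_le_nhds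
  exact ge_of_tendsto hlim (eventually_mem_nhdsWithin.mono hperturb)

theorem exists_adj_of_notMem_of_reflTransGen {x y : X} (hx : x ∉ Y) (hy : y ∈ Y)
    (h : Relation.ReflTransGen adj x y) : ∃ z, adj x z :=
  let ⟨z, hxz, _⟩ := h.cases_head.resolve_left (ne_of_mem_of_not_mem hy hx).symm
  ⟨z, hxz⟩

theorem stmt18_general (hadj : ∀ x ∉ Y, ∃ y, adj x y)
    (hf : ∃ c : ℝ, 0 < c ∧ ∀ x ∉ Y, c ≤ f x)
    (hub : ∃ M : ℝ, ∀ x, |u x| ≤ M) (hvb : ∃ M : ℝ, ∀ x, |v x| ≤ M) (huv : EqOn u v Y)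
    (hu : ∀ x ∉ Y, u x = midrange (u '' {y | adj x y}) + f x)
    (hv : ∀ x ∉ Y, v x = midrange (v '' {y | adj x y}) + f x) :
    u = v := by
  obtain ⟨c, hc, hcf⟩ := hf
  have hub' : IsBounded (range u) :=
    isBounded_iff_forall_norm_le.2 (hub.imp fun _ ↦ forall_mem_range.2)
  have hvb' : IsBounded (range v) :=
    isBounded_iff_forall_norm_le.2 (hvb.imp fun _ ↦ forall_mem_range.2)
  have hu_sub : IsSubsolution adj Y f u := fun x hx ↦ (hu x hx).le
  have hu_super : IsSupersolution adj Y f u := fun x hx ↦ (hu x hx).ge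
  have hv_sub : IsSubsolution adj Y f v := fun x hx ↦ (hv x hx).le
  have hv_super : IsSupersolution adj Y f v := fun x hx ↦ (hv x hx).ge
  exact le_antisymm
    (hu_sub.le_of_isSupersolution hadj hv_super hub' hvb' hc hcf fun x hx ↦ (huv hx).le)
    (hv_sub.le_of_isSupersolution hadj hu_super hvb' hub' hc hcf fun x hx ↦ (huv hx).ge)

end Comparison

/-- Uniqueness for the discrete inhomogeneous equation: on a connected graph with
nonempty terminal set `Y`, bounded terminal payoff `F`, and running payoff `f` with
`inf f > 0` and `sup f < ∞`, any two bounded functions agreeing with `F` on `Y` and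
satisfying `u x = (sup {u y : y ∼ x} + inf {u y : y ∼ x}) / 2 + f x` off `Y`
coincide. -/
theorem stmt18 {X : Type*} (adj : X → X → Prop) (hadj : Symmetric adj)
    (hconn : ∀ x y : X, Relation.ReflTransGen adj x y)
    (Y : Set X) (hY : Y.Nonempty) (F : X → ℝ)
    (hF : ∃ M : ℝ, ∀ y ∈ Y, |F y| ≤ M)
    (f : X → ℝ)
    (hfpos : ∃ c : ℝ, 0 < c ∧ ∀ x ∉ Y, c ≤ f x)
    (hfbdd : ∃ M : ℝ, ∀ x ∉ Y, f x ≤ M)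
    (u₁ u₂ : X → ℝ)
    (hb₁ : ∃ M : ℝ, ∀ x : X, |u₁ x| ≤ M) (hb₂ : ∃ M : ℝ, ∀ x : X, |u₂ x| ≤ M)
    (hY₁ : Set.EqOn u₁ F Y) (hY₂ : Set.EqOn u₂ F Y)
    (he₁ : ∀ x ∉ Y,
      u₁ x = (sSup (u₁ '' {y | adj x y}) + sInf (u₁ '' {y | adj x y})) / 2 + f x)
    (he₂ : ∀ x ∉ Y,
      u₂ x = (sSup (u₂ '' {y | adj x y}) + sInf (u₂ '' {y | adj x y})) / 2 + f x) :
    u₁ = u₂ := by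
  obtain ⟨_, hy⟩ := hY
  exact stmt18_general (fun x hx ↦ exists_adj_of_notMem_of_reflTransGen hx hy (hconn x _)) hfpos
    hb₁ hb₂ (hY₁.trans hY₂.symm) he₁ he₂
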